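/- Let S and A be nonempty finite types, P : S → A → PMF S a transition kernel, ρ0 a probability distribution on S, and γ ∈ [0,1). Let π and π' be policies with π(a|s) > 0 for all s, a, let σ ≥ 0, let R_e : S × A → ℝ be a reward function, g : S × A → ℝ any function and δ ∈ ℝ, and set R_i(s,a) = min{g(s,a) − δ, 0} and R(s,a) = R_e(s,a) + σ R_i(s,a). For any function f : S → ℝ define δ_f(s,a,s') = R(s,a) + γ f(s') − f(s), ε_f^{π'} = max_s |Σ_a π'(a|s) Σ_{s'} P(s'|s,a) δ_f(s,a,s')|, and T_{π,f}(π') = Σ_s d^π(s) Σ_a π(a|s) Σ_{s'} P(s'|s,a) (π'(a|s)/π(a|s) − 1) δ_f(s,a,s'). Then J_R(π') − J_R(π) ≥ T_{π,f}(π')/(1−γ) − (2γ ε_f^{π'}/(1−γ)²) · Σ_s d^π(s) D_TV(π'‖π)[s]. -/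

import Mathlib

open scoped BigOperators

section MDPdefs

variable {S A : Type*} [Fintype S] [Fintype A]

/-- The state-marginal distribution at time `t` under policy `π`:
`ρ_0 = ρ0` and `ρ_{t+1}(s') = ∑_s ∑_a ρ_t(s) π(a|s) P(s'|s,a)`. -/
noncomputable def stateMarginal (P : S → A → PMF S) (ρ0 : PMF S) (π : S → PMF A) :
    ℕ → S → ℝ
  | 0, s => (ρ0 s).toReal
  | t + 1, s' => ∑ s : S, ∑ a : A,
      stateMarginal P ρ0 π t s * (π s a).toReal * (P s a s').toReal

/-- The discounted state visitation distribution `d^π(s) = (1-γ) ∑_t γ^t ρ_t^π(s)`. -/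
noncomputable def dVisit (P : S → A → PMF S) (ρ0 : PMF S) (γ : ℝ) (π : S → PMF A)
    (s : S) : ℝ :=
  (1 - γ) * ∑' t : ℕ, γ ^ t * stateMarginal P ρ0 π t s

/-- The discounted return `J_R(π) = ∑_t γ^t ∑_s ∑_a ρ_t^π(s) π(a|s) R(s,a)`. -/
noncomputable def Jret (P : S → A → PMF S) (ρ0 : PMF S) (γ : ℝ) (π : S → PMF A)
    (R : S → A → ℝ) : ℝ :=
  ∑' t : ℕ, γ ^ t * ∑ s : S, ∑ a : A,
      stateMarginal P ρ0 π t s * (π s a).toReal * R s a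

/-- Total variational divergence between the action distributions of two policies at `s`. -/
noncomputable def dTV (π' π : S → PMF A) (s : S) : ℝ :=
  (1 / 2) * ∑ a : A, |(π' s a).toReal - (π s a).toReal|

/-- Value function of `π` with reward `R`: expected discounted return started at `s`. -/
noncomputable def Vval (P : S → A → PMF S) (γ : ℝ) (π : S → PMF A) (R : S → A → ℝ)
    (s : S) : ℝ :=
  Jret P (PMF.pure s) γ π R

/-- State-action value function `Q^π_R(s,a) = R(s,a) + γ ∑_{s'} P(s'|s,a) V^π_R(s')`. -/
noncomputable def Qval (P : S → A → PMF S) (γ : ℝ) (π : S → PMF A) (R : S → A → ℝ)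
    (s : S) (a : A) : ℝ :=
  R s a + γ * ∑ s' : S, (P s a s').toReal * Vval P γ π R s'

/-- Advantage function `A^π_R(s,a) = Q^π_R(s,a) - V^π_R(s)`. -/
noncomputable def Aadv (P : S → A → PMF S) (γ : ℝ) (π : S → PMF A) (R : S → A → ℝ)
    (s : S) (a : A) : ℝ :=
  Qval P γ π R s a - Vval P γ π R s

/-- Kullback–Leibler divergence between the action distributions at state `s`. -/
noncomputable def dKL (π' π : S → PMF A) (s : S) : ℝ :=
  ∑ a : A, (π' s a).toReal * Real.log ((π' s a).toReal / (π s a).toReal)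

end MDPdefs

lemma pmf_sum_toReal {X : Type*} [Fintype X] (p : PMF X) : ∑ x, (p x).toReal = 1 := by
  rw [← ENNReal.toReal_sum (fun x _ => p.apply_ne_top x)]
  have := p.tsum_coe
  rw [tsum_fintype] at this
  rw [this]; rfl

section Core
variable {S A : Type*} [Fintype S] [Fintype A]

lemma stateMarginal_nonneg (P : S → A → PMF S) (ρ0 : PMF S) (π : S → PMF A) (t : ℕ) (s : S) :
    0 ≤ stateMarginal P ρ0 π t s := by
  induction t generalizing s with
  | zero => simp [stateMarginal]
  | succ t ih =>
    simp only [stateMarginal]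
    exact Finset.sum_nonneg fun s _ => Finset.sum_nonneg fun a _ =>
      mul_nonneg (mul_nonneg (ih s) ENNReal.toReal_nonneg) ENNReal.toReal_nonneg

lemma flow_sum (P : S → A → PMF S) (x : S → A → ℝ) :
    ∑ s', ∑ s, ∑ a, x s a * (P s a s').toReal = ∑ s, ∑ a, x s a := by
  rw [Finset.sum_comm]
  refine Finset.sum_congr rfl fun s _ => ?_
  rw [Finset.sum_comm]
  refine Finset.sum_congr rfl fun a _ => ?_
  rw [← Finset.mul_sum, pmf_sum_toReal, mul_one]

lemma stateMarginal_sum (P : S → A → PMF S) (ρ0 : PMF S) (π : S → PMF A) (t : ℕ) :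
    ∑ s, stateMarginal P ρ0 π t s = 1 := by
  induction t with
  | zero => simpa [stateMarginal] using pmf_sum_toReal ρ0
  | succ t ih =>
    simp only [stateMarginal]
    rw [flow_sum P (fun s a => stateMarginal P ρ0 π t s * (π s a).toReal)]
    simp_rw [← Finset.mul_sum, pmf_sum_toReal, mul_one]
    exact ih

lemma stateMarginal_le_one (P : S → A → PMF S) (ρ0 : PMF S) (π : S → PMF A) (t : ℕ) (s : S) :
    stateMarginal P ρ0 π t s ≤ 1 := by
  rw [← stateMarginal_sum P ρ0 π t]
  exact Finset.single_le_sum (fun i _ => stateMarginal_nonneg P ρ0 π t i) (Finset.mem_univ s)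

lemma disc_summable (P : S → A → PMF S) (ρ0 : PMF S) (γ : ℝ) (hγ0 : 0 ≤ γ) (hγ1 : γ < 1)
    (π : S → PMF A) (s : S) : Summable fun t : ℕ => γ ^ t * stateMarginal P ρ0 π t s := by
  refine Summable.of_nonneg_of_le
    (fun t => mul_nonneg (pow_nonneg hγ0 t) (stateMarginal_nonneg P ρ0 π t s))
    (fun t => ?_) (summable_geometric_of_lt_one hγ0 hγ1)
  exact mul_le_of_le_one_right (pow_nonneg hγ0 t) (stateMarginal_le_one P ρ0 π t s)

noncomputable def occ (P : S → A → PMF S) (ρ0 : PMF S) (γ : ℝ) (π : S → PMF A) (s : S) : ℝ :=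
  ∑' t : ℕ, γ ^ t * stateMarginal P ρ0 π t s

lemma occ_nonneg (P : S → A → PMF S) (ρ0 : PMF S) (γ : ℝ) (hγ0 : 0 ≤ γ)
    (π : S → PMF A) (s : S) : 0 ≤ occ P ρ0 γ π s :=
  tsum_nonneg fun t => mul_nonneg (pow_nonneg hγ0 t) (stateMarginal_nonneg P ρ0 π t s)

lemma occ_hasSum (P : S → A → PMF S) (ρ0 : PMF S) (γ : ℝ) (hγ0 : 0 ≤ γ) (hγ1 : γ < 1)
    (π : S → PMF A) (x : S → A → ℝ) :
    HasSum (fun t : ℕ => γ ^ t * ∑ s, ∑ a, stateMarginal P ρ0 π t s * (π s a).toReal * x s a)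
      (∑ s, ∑ a, occ P ρ0 γ π s * (π s a).toReal * x s a) := by
  have : HasSum (fun t : ℕ => ∑ s, ∑ a,
      (γ ^ t * stateMarginal P ρ0 π t s) * (π s a).toReal * x s a)
      (∑ s, ∑ a, occ P ρ0 γ π s * (π s a).toReal * x s a) :=
    hasSum_sum fun s _ => hasSum_sum fun a _ =>
      (((disc_summable P ρ0 γ hγ0 hγ1 π s).hasSum).mul_right _).mul_right _
  convert this using 2 with t
  simp only [Finset.mul_sum, mul_assoc]

lemma Jret_eq (P : S → A → PMF S) (ρ0 : PMF S) (γ : ℝ) (hγ0 : 0 ≤ γ) (hγ1 : γ < 1)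
    (π : S → PMF A) (R : S → A → ℝ) :
    Jret P ρ0 γ π R = ∑ s, ∑ a, occ P ρ0 γ π s * (π s a).toReal * R s a :=
  (occ_hasSum P ρ0 γ hγ0 hγ1 π R).tsum_eq

lemma occ_flow (P : S → A → PMF S) (ρ0 : PMF S) (γ : ℝ) (hγ0 : 0 ≤ γ) (hγ1 : γ < 1)
    (π : S → PMF A) (s' : S) :
    occ P ρ0 γ π s' = (ρ0 s').toReal +
      γ * ∑ s, ∑ a, occ P ρ0 γ π s * (π s a).toReal * (P s a s').toReal := by
  have h := (occ_hasSum P ρ0 γ hγ0 hγ1 π (fun s a => (P s a s').toReal)).mul_left γ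
  rw [← h.tsum_eq]
  unfold occ
  rw [(disc_summable P ρ0 γ hγ0 hγ1 π s').tsum_eq_zero_add]
  congr 1
  · simp [stateMarginal]
  · refine tsum_congr fun t => ?_
    simp only [stateMarginal]
    ring

/-- expected TD error identity -/
lemma occ_td (P : S → A → PMF S) (ρ0 : PMF S) (γ : ℝ) (hγ0 : 0 ≤ γ) (hγ1 : γ < 1)
    (π : S → PMF A) (R : S → A → ℝ) (f : S → ℝ) :
    ∑ s, occ P ρ0 γ π s * ∑ a, (π s a).toReal * ∑ s', (P s a s').toReal *
      (R s a + γ * f s' - f s) = Jret P ρ0 γ π R - ∑ s, (ρ0 s).toReal * f s := by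
  have h1 : ∀ s a, ∑ s', (P s a s').toReal * (R s a + γ * f s' - f s)
      = R s a - f s + γ * ∑ s', (P s a s').toReal * f s' := by
    intro s a
    have : ∀ s', (P s a s').toReal * (R s a + γ * f s' - f s)
      = (P s a s').toReal * (R s a - f s) + γ * ((P s a s').toReal * f s') := fun s' => by ring
    simp_rw [this]
    rw [Finset.sum_add_distrib, ← Finset.sum_mul, pmf_sum_toReal, one_mul, ← Finset.mul_sum]
  have h2 : ∀ s, ∑ a, (π s a).toReal * (R s a - f s + γ * ∑ s', (P s a s').toReal * f s')
      = ∑ a, (π s a).toReal * R s a - f s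
        + γ * ∑ a, (π s a).toReal * ∑ s', (P s a s').toReal * f s' := by
    intro s
    simp_rw [mul_add, mul_sub]
    rw [Finset.sum_add_distrib, Finset.sum_sub_distrib, ← Finset.sum_mul, pmf_sum_toReal, one_mul,
      Finset.mul_sum]
    congr 1
    exact Finset.sum_congr rfl fun a _ => by ring
  have h3 : ∑ s', occ P ρ0 γ π s' * f s' = ∑ s, (ρ0 s).toReal * f s +
      γ * ∑ s, occ P ρ0 γ π s * ∑ a, (π s a).toReal * ∑ s', (P s a s').toReal * f s' := by
    have : ∀ s', occ P ρ0 γ π s' * f s' = (ρ0 s').toReal * f s' +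
      γ * ((∑ s, ∑ a, occ P ρ0 γ π s * (π s a).toReal * (P s a s').toReal) * f s') := by
      intro s'
      conv_lhs => rw [occ_flow P ρ0 γ hγ0 hγ1 π s']
      ring
    rw [Finset.sum_congr rfl fun s' _ => this s', Finset.sum_add_distrib, ← Finset.mul_sum]
    congr 2
    simp_rw [Finset.sum_mul, Finset.mul_sum]
    rw [Finset.sum_comm]
    refine Finset.sum_congr rfl fun s _ => ?_
    rw [Finset.sum_comm]
    exact Finset.sum_congr rfl fun a _ => Finset.sum_congr rfl fun s' _ => by ring
  simp_rw [h1, h2]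
  rw [Jret_eq P ρ0 γ hγ0 hγ1]
  have h4 : ∑ s, ∑ a, occ P ρ0 γ π s * (π s a).toReal * R s a
      = ∑ s, occ P ρ0 γ π s * ∑ a, (π s a).toReal * R s a := by
    simp_rw [Finset.mul_sum, mul_assoc]
  rw [h4]
  simp_rw [mul_add, mul_sub]
  rw [Finset.sum_add_distrib, Finset.sum_sub_distrib, h3, Finset.mul_sum]
  have : ∀ s, occ P ρ0 γ π s * (γ * ∑ a, (π s a).toReal * ∑ s', (P s a s').toReal * f s')
    = γ * (occ P ρ0 γ π s * ∑ a, (π s a).toReal * ∑ s', (P s a s').toReal * f s') :=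
    fun s => by ring
  simp_rw [this]
  ring

lemma occ_diff (P : S → A → PMF S) (ρ0 : PMF S) (γ : ℝ) (hγ0 : 0 ≤ γ) (hγ1 : γ < 1)
    (π π' : S → PMF A) :
    (1 - γ) * ∑ s, |occ P ρ0 γ π' s - occ P ρ0 γ π s| ≤
      γ * (2 * ∑ s, occ P ρ0 γ π s * dTV π' π s) := by
  set D := occ P ρ0 γ π with hD
  set D' := occ P ρ0 γ π' with hD'
  have key : ∀ s', |D' s' - D s'| ≤ γ * ∑ s, ∑ a,
      (|D' s - D s| * (π' s a).toReal + D s * |(π' s a).toReal - (π s a).toReal|)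
        * (P s a s').toReal := by
    intro s'
    have e : D' s' - D s' = γ * ∑ s, ∑ a, ((D' s - D s) * (π' s a).toReal
        + D s * ((π' s a).toReal - (π s a).toReal)) * (P s a s').toReal := by
      rw [hD, hD', occ_flow P ρ0 γ hγ0 hγ1 π s', occ_flow P ρ0 γ hγ0 hγ1 π' s',
        add_sub_add_left_eq_sub, ← mul_sub, ← Finset.sum_sub_distrib]
      congr 1
      refine Finset.sum_congr rfl fun s _ => ?_
      rw [← Finset.sum_sub_distrib]
      exact Finset.sum_congr rfl fun a _ => by ring
    rw [e, abs_mul, abs_of_nonneg hγ0]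
    refine mul_le_mul_of_nonneg_left ?_ hγ0
    refine (Finset.abs_sum_le_sum_abs _ _).trans (Finset.sum_le_sum fun s _ => ?_)
    refine (Finset.abs_sum_le_sum_abs _ _).trans (Finset.sum_le_sum fun a _ => ?_)
    rw [abs_mul, abs_of_nonneg (ENNReal.toReal_nonneg (a := P s a s'))]
    refine mul_le_mul_of_nonneg_right ?_ ENNReal.toReal_nonneg
    refine (abs_add_le _ _).trans (le_of_eq ?_)
    rw [abs_mul, abs_mul, abs_of_nonneg (ENNReal.toReal_nonneg (a := π' s a)),
      abs_of_nonneg (occ_nonneg P ρ0 γ hγ0 π s)]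
  have h := Finset.sum_le_sum fun s' (_ : s' ∈ Finset.univ) => key s'
  rw [← Finset.mul_sum, flow_sum P (fun s a => |D' s - D s| * (π' s a).toReal
    + D s * |(π' s a).toReal - (π s a).toReal|)] at h
  simp_rw [Finset.sum_add_distrib, ← Finset.mul_sum, pmf_sum_toReal, mul_one] at h
  have e2 : 2 * ∑ s, D s * dTV π' π s
      = ∑ s, D s * ∑ a, |(π' s a).toReal - (π s a).toReal| := by
    rw [Finset.mul_sum]
    exact Finset.sum_congr rfl fun s _ => by rw [dTV]; ring
  rw [e2]
  linarith

end Core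

/-- Theorem 1 (lower bound): performance bound of the trajectory-constrained
exploration strategy. -/
theorem tace_performance_lower_bound
    {S A : Type*} [Fintype S] [Fintype A] [Nonempty S] [Nonempty A]
    (P : S → A → PMF S) (ρ0 : PMF S) (γ : ℝ) (hγ0 : 0 ≤ γ) (hγ1 : γ < 1)
    (π π' : S → PMF A) (hπpos : ∀ s a, 0 < (π s a).toReal)
    (σ : ℝ) (hσ : 0 ≤ σ) (Re g : S → A → ℝ) (δ : ℝ) (f : S → ℝ) :
    let Ri : S → A → ℝ := fun s a => min (g s a - δ) 0
    let R : S → A → ℝ := fun s a => Re s a + σ * Ri s a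
    let δf : S → A → S → ℝ := fun s a s' => R s a + γ * f s' - f s
    let εf : ℝ :=
      ⨆ s : S, |∑ a : A, (π' s a).toReal * ∑ s' : S, (P s a s').toReal * δf s a s'|
    let Tf : ℝ := ∑ s : S, dVisit P ρ0 γ π s * ∑ a : A, (π s a).toReal *
        ∑ s' : S, (P s a s').toReal *
          (((π' s a).toReal / (π s a).toReal - 1) * δf s a s')
    Jret P ρ0 γ π' R - Jret P ρ0 γ π R ≥
      Tf / (1 - γ) -
        (2 * γ * εf / (1 - γ) ^ 2) * ∑ s : S, dVisit P ρ0 γ π s * dTV π' π s := by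
  intro Ri R δf εf Tf
  set D := occ P ρ0 γ π with hD
  set D' := occ P ρ0 γ π' with hD'
  set G' : S → ℝ := fun s => ∑ a : A, (π' s a).toReal * ∑ s' : S, (P s a s').toReal * δf s a s'
    with hG'
  set G : S → ℝ := fun s => ∑ a : A, (π s a).toReal * ∑ s' : S, (P s a s').toReal * δf s a s'
    with hG
  have h1γ : 0 < 1 - γ := by linarith
  have e1 : ∑ s, D s * G s = _ := occ_td P ρ0 γ hγ0 hγ1 π R f
  have e2 : ∑ s, D' s * G' s = _ := occ_td P ρ0 γ hγ0 hγ1 π' R f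
  have hd : ∀ s, dVisit P ρ0 γ π s = (1 - γ) * D s := fun s => rfl
  have eT : Tf / (1 - γ) = ∑ s, D s * (G' s - G s) := by
    rw [div_eq_iff h1γ.ne', Finset.sum_mul]
    refine Finset.sum_congr rfl fun s _ => ?_
    rw [hd, mul_assoc, mul_comm, mul_assoc, mul_assoc]
    congr 1
    rw [mul_comm, mul_comm _ (1 - γ)]
    congr 1
    simp only [hG, hG']
    rw [← Finset.sum_sub_distrib]
    refine Finset.sum_congr rfl fun a _ => ?_
    have hp := (hπpos s a).ne'
    rw [← sub_mul, Finset.mul_sum, Finset.mul_sum]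
    refine Finset.sum_congr rfl fun s' _ => ?_
    field_simp
  have eV : ∑ s, dVisit P ρ0 γ π s * dTV π' π s = (1 - γ) * ∑ s, D s * dTV π' π s := by
    rw [Finset.mul_sum]
    exact Finset.sum_congr rfl fun s _ => by rw [hd]; ring
  have hε : ∀ s, |G' s| ≤ εf := fun s =>
    le_ciSup (f := fun s => |G' s|) (Set.finite_range _).bddAbove s
  have hε0 : 0 ≤ εf := (abs_nonneg _).trans (hε (Classical.arbitrary S))
  have hdiff := occ_diff P ρ0 γ hγ0 hγ1 π π'
  have hb : -(εf * ∑ s, |D' s - D s|) ≤ ∑ s, (D' s - D s) * G' s := by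
    have : |∑ s, (D' s - D s) * G' s| ≤ εf * ∑ s, |D' s - D s| := by
      refine (Finset.abs_sum_le_sum_abs _ _).trans ?_
      rw [Finset.mul_sum]
      refine Finset.sum_le_sum fun s _ => ?_
      rw [abs_mul, mul_comm]
      exact mul_le_mul_of_nonneg_right (hε s) (abs_nonneg _)
    exact (abs_le.mp this).1
  have e3 : Jret P ρ0 γ π' R - Jret P ρ0 γ π R
      = ∑ s, D s * (G' s - G s) + ∑ s, (D' s - D s) * G' s := by
    have : ∑ s, D s * (G' s - G s) + ∑ s, (D' s - D s) * G' s
        = ∑ s, D' s * G' s - ∑ s, D s * G s := by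
      rw [← Finset.sum_add_distrib, ← Finset.sum_sub_distrib]
      exact Finset.sum_congr rfl fun s _ => by ring
    rw [this, e1, e2]; ring
  rw [e3, eT, eV]
  have e4 : (2 * γ * εf / (1 - γ) ^ 2) * ((1 - γ) * ∑ s, D s * dTV π' π s)
      = εf * ((γ * (2 * ∑ s, D s * dTV π' π s)) / (1 - γ)) := by
    field_simp
  rw [e4]
  have h5 : ∑ s, |D' s - D s| ≤ (γ * (2 * ∑ s, D s * dTV π' π s)) / (1 - γ) := by
    rw [le_div_iff₀ h1γ, mul_comm]
    exact hdiff
  have h6 := mul_le_mul_of_nonneg_left h5 hε0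
  linarith
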